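/- For every integer m ≥ 1 there is a constant c > 0, depending only on f, D and m, such that for every ν ∈ (0,1], the time average over [T₁,T₂] satisfies { ‖u(t)‖_m² } ≥ c ν^{−(2m−1)}. -/

import Mathlib

open MeasureTheory Set
open scoped ENNReal

/-- The `L^p` norm (on the circle, i.e. over one period `(0,1]`) of the `m`-th
derivative of a function `v : ℝ → ℝ` (identified with a function on `S¹ = ℝ/ℤ`). -/
noncomputable def sobLp (m : ℕ) (p : ℝ≥0∞) (v : ℝ → ℝ) : ℝ :=
  (eLpNorm (iteratedDeriv m v) p (volume.restrict (Ioc (0:ℝ) 1))).toReal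

/-- `u` is a smooth, space-periodic, zero-mean-value solution of the generalised
Burgers equation `u_t + f'(u) u_x - ν u_xx = 0` with strongly convex `f` and
nonzero initial condition. -/
structure IsBurgersSolution (f : ℝ → ℝ) (σ ν : ℝ) (u : ℝ → ℝ → ℝ) : Prop where
  hf : ContDiff ℝ (⊤ : ℕ∞) f
  hσ : 0 < σ
  hconv : ∀ y, σ ≤ iteratedDeriv 2 f y
  hν : 0 < ν
  hu : ContDiffOn ℝ (⊤ : ℕ∞) (Function.uncurry u) (Ici (0:ℝ) ×ˢ univ)
  hper : ∀ t x, u t (x + 1) = u t x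
  hpde : ∀ t, 0 < t → ∀ x,
    deriv (fun s => u s x) t + deriv f (u t x) * deriv (u t) x
      - ν * deriv (deriv (u t)) x = 0
  hmean : ∀ t, 0 ≤ t → ∫ x in Ioc (0:ℝ) 1, u t x = 0
  hinit : ∃ x, u 0 x ≠ 0

/-- The quantity `D = max(|u₀|₁⁻¹, |u₀|_{1,∞})`. -/
noncomputable def burgersD (u : ℝ → ℝ → ℝ) : ℝ :=
  max (sobLp 0 1 (u 0))⁻¹ (sobLp 1 ⊤ (u 0))

/-- `T₁ = D⁻² C̃⁻¹ / 4`. -/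
noncomputable def burgersT₁ (D Ct : ℝ) : ℝ := (D ^ 2)⁻¹ * Ct⁻¹ / 4

/-- `T₂ = max(3T₁/2, 2Dσ⁻¹)`. -/
noncomputable def burgersT₂ (σ D Ct : ℝ) : ℝ :=
  max (3 / 2 * burgersT₁ D Ct) (2 * D * σ⁻¹)

/-- Time average over `[T₁, T₂]`. -/
noncomputable def timeAvg (T₁ T₂ : ℝ) (A : ℝ → ℝ) : ℝ :=
  (T₂ - T₁)⁻¹ * ∫ t in T₁..T₂, A t

/-- The structure function `S_p(ℓ)`. -/
noncomputable def structFun (T₁ T₂ : ℝ) (u : ℝ → ℝ → ℝ) (p ℓ : ℝ) : ℝ :=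
  timeAvg T₁ T₂ (fun t => ∫ x in Ioc (0:ℝ) 1, |u t (x + ℓ) - u t x| ^ p)

/-!
At a space-time maximum of `t * u_x` the strong convexity of `f` dominates, which gives Oleinik's
one-sided bound `u_x ≤ (σ * t)⁻¹`. Since `u` is periodic with mean zero, this bounds both the
`W^{1,1}` norm and the `L^2` norm of `u(t)`, uniformly in `ν`. The energy `‖u‖₀²` is at least `D⁻²`
initially, has lost at most half of it by time `T₁` because `‖u‖₁² ≤ C̃ / ν`, and is at most
`D⁻² / 4` at time `T₂` by the one-sided bound; the energy identity
`(d/dt) ‖u‖₀² = -2 * ν * ‖u‖₁²` then forces `{‖u‖₁²}` to be of order at least `ν⁻¹`.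
Interpolating `‖u‖₁` between the `W^{1,1}` and `H^m` norms bounds `(‖u‖₁²) ^ (2 * m - 1)` by a
multiple of `‖u‖_m²`, and Jensen's inequality moves the power outside the time average.
-/

section IntegralInequalities

variable {α : Type*} [MeasurableSpace α] {μ : Measure α}

theorem sq_integral_mul_le {g h : α → ℝ} (hg : MemLp g 2 μ) (hh : MemLp h 2 μ) :
    (∫ x, g x * h x ∂μ) ^ 2 ≤ (∫ x, g x ^ 2 ∂μ) * ∫ x, h x ^ 2 ∂μ := by
  have integral_eq_inner : ∀ {v w : α → ℝ} (hv : MemLp v 2 μ) (hw : MemLp w 2 μ),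
      ∫ x, v x * w x ∂μ = inner ℝ (hw.toLp w) (hv.toLp v) := fun hv hw => by
    rw [L2.inner_def]
    refine integral_congr_ae ?_
    filter_upwards [hv.coeFn_toLp, hw.coeFn_toLp] with x hvx hwx
    simp [hvx, hwx]
  simp only [sq (g _), sq (h _), integral_eq_inner hg hg, integral_eq_inner hh hh,
    integral_eq_inner hg hh]
  rw [sq, mul_comm (inner ℝ (hg.toLp g) _)]
  exact real_inner_mul_inner_self_le _ _

theorem integral_abs_le_of_le_of_integral_eq_zero [IsProbabilityMeasure μ] {w : α → ℝ} {B : ℝ}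
    (hw : Integrable w μ) (hmean : ∫ x, w x ∂μ = 0) (hB : ∀ x, w x ≤ B) :
    ∫ x, |w x| ∂μ ≤ 2 * B := by
  have hB0 : 0 ≤ B := by
    simpa [hmean] using integral_mono hw (integrable_const B) hB
  calc ∫ x, |w x| ∂μ ≤ ∫ x, (2 * B - w x) ∂μ := by
        refine integral_mono hw.abs ((integrable_const _).sub hw) fun x => ?_
        rw [abs_le]
        constructor <;> linarith [hB x]
    _ = 2 * B := by
        rw [integral_sub (integrable_const _) hw, hmean]
        simp

variable {a b : ℝ}

theorem memLp_restrict_Ioc_of_continuous {E : Type*} [NormedAddCommGroup E] {g : ℝ → E}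
    (hg : Continuous g) (p : ℝ≥0∞) : MemLp g p (volume.restrict (Ioc a b)) := by
  obtain ⟨C, hC⟩ := (isCompact_Icc (a := a) (b := b)).exists_bound_of_continuousOn hg.continuousOn
  refine MemLp.of_bound hg.aestronglyMeasurable C ?_
  filter_upwards [ae_restrict_mem measurableSet_Ioc] with x hx
  exact hC x (Ioc_subset_Icc_self hx)

theorem sq_intervalIntegral_mul_le (hab : a ≤ b) {g h : ℝ → ℝ} (hg : Continuous g)
    (hh : Continuous h) :
    (∫ x in a..b, g x * h x) ^ 2 ≤ (∫ x in a..b, g x ^ 2) * ∫ x in a..b, h x ^ 2 := by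
  simp only [intervalIntegral.integral_of_le hab]
  exact sq_integral_mul_le (memLp_restrict_Ioc_of_continuous hg 2)
    (memLp_restrict_Ioc_of_continuous hh 2)

theorem sq_le_two_mul_integral_abs_mul_abs_deriv {w : ℝ → ℝ} (hw : ContDiff ℝ 1 w) {x z : ℝ}
    (hz : z ∈ Icc a b) (hwz : w z = 0) (hx : x ∈ Icc a b) :
    w x ^ 2 ≤ 2 * ∫ y in a..b, |w y| * |deriv w y| := by
  have : Continuous (deriv w) := hw.continuous_deriv le_rfl
  have hc : Continuous fun y => 2 * (w y * deriv w y) := by fun_prop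
  have hab : a ≤ b := hz.1.trans hz.2
  have hftc : ∫ y in z..x, 2 * (w y * deriv w y) = w x ^ 2 := by
    rw [intervalIntegral.integral_eq_sub_of_hasDerivAt (f := fun y => w y ^ 2)
      (fun y _ => ?_) (hc.intervalIntegrable _ _)]
    · simp [hwz]
    · simpa [mul_assoc] using ((hw.differentiable one_ne_zero y).hasDerivAt.fun_pow 2)
  calc w x ^ 2 ≤ ‖∫ y in z..x, 2 * (w y * deriv w y)‖ := hftc ▸ le_abs_self _
    _ ≤ |∫ y in z..x, ‖2 * (w y * deriv w y)‖| :=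
        intervalIntegral.norm_integral_le_abs_integral_norm
    _ ≤ |∫ y in a..b, ‖2 * (w y * deriv w y)‖| := by
        refine intervalIntegral.abs_integral_mono_interval ?_ (.of_forall fun _ => norm_nonneg _)
          (hc.norm.intervalIntegrable _ _)
        rw [uIoc_of_le hab]
        exact Ioc_subset_Ioc (le_min hz.1 hx.1) (max_le hz.2 hx.2)
    _ = 2 * ∫ y in a..b, |w y| * |deriv w y| := by
        rw [abs_of_nonneg (intervalIntegral.integral_nonneg hab fun _ _ => norm_nonneg _),
          ← intervalIntegral.integral_const_mul]
        simp

theorem integral_sq_pow_three_le {w : ℝ → ℝ} (hw : ContDiff ℝ 1 w) {z : ℝ} (hz : z ∈ Icc a b)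
    (hwz : w z = 0) :
    (∫ x in a..b, w x ^ 2) ^ 3 ≤
      4 * (∫ x in a..b, |w x|) ^ 4 * ∫ x in a..b, deriv w x ^ 2 := by
  have hw' : Continuous (deriv w) := hw.continuous_deriv le_rfl
  have hwc : Continuous w := hw.continuous
  have hab : a ≤ b := hz.1.trans hz.2
  set A := ∫ x in a..b, w x ^ 2
  set A' := ∫ x in a..b, deriv w x ^ 2
  set L := ∫ x in a..b, |w x|
  set P := ∫ x in a..b, |w x| * |deriv w x|
  have hA : 0 ≤ A := intervalIntegral.integral_nonneg hab fun _ _ => sq_nonneg _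
  have hA' : 0 ≤ A' := intervalIntegral.integral_nonneg hab fun _ _ => sq_nonneg _
  have hP : 0 ≤ P := intervalIntegral.integral_nonneg hab fun _ _ => by positivity
  have hP_sq : P ^ 2 ≤ A * A' := by
    simpa only [sq_abs] using sq_intervalIntegral_mul_le hab hwc.abs hw'.abs
  have hA_le : A ≤ √(2 * P) * L := by
    rw [← intervalIntegral.integral_const_mul]
    refine intervalIntegral.integral_mono_on hab ((hwc.pow 2).intervalIntegrable _ _)
      ((hwc.abs.const_mul _).intervalIntegrable _ _) fun x hx => ?_
    rw [← sq_abs, sq]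
    gcongr
    exact Real.abs_le_sqrt (sq_le_two_mul_integral_abs_mul_abs_deriv hw hz hwz hx)
  have hA_pow : A * A ^ 3 ≤ A * (4 * L ^ 4 * A') := by
    calc A * A ^ 3 = A ^ 4 := by ring
      _ ≤ (√(2 * P) * L) ^ 4 := by gcongr
      _ = (√(2 * P) ^ 2) ^ 2 * L ^ 4 := by ring
      _ = 4 * L ^ 4 * P ^ 2 := by rw [Real.sq_sqrt (by positivity)]; ring
      _ ≤ 4 * L ^ 4 * (A * A') := by gcongr
      _ = A * (4 * L ^ 4 * A') := by ring
  rcases hA.eq_or_lt with hA0 | hApos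
  · rw [← hA0, zero_pow three_ne_zero]
    positivity
  · exact le_of_mul_le_mul_left hA_pow hApos

theorem integral_mul_deriv_deriv_eq_neg {g : ℝ → ℝ} (hg : ContDiff ℝ 2 g) (hgab : g a = g b)
    (hgab' : deriv g a = deriv g b) :
    ∫ x in a..b, g x * deriv (deriv g) x = -∫ x in a..b, deriv g x ^ 2 := by
  have hg' : ContDiff ℝ 1 (deriv g) := hg.deriv'
  rw [intervalIntegral.integral_mul_deriv_eq_deriv_mul (u := g) (v := deriv g)
    (fun x _ => (hg.differentiable two_ne_zero x).hasDerivAt)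
    (fun x _ => (hg'.differentiable one_ne_zero x).hasDerivAt)
    (hg'.continuous.intervalIntegrable _ _)
    ((hg'.continuous_deriv le_rfl).intervalIntegrable _ _), hgab, hgab', sub_self, zero_sub]
  simp only [sq]

theorem sq_integral_deriv_sq_le (hab : a ≤ b) {g : ℝ → ℝ} (hg : ContDiff ℝ 2 g)
    (hgab : g a = g b) (hgab' : deriv g a = deriv g b) :
    (∫ x in a..b, deriv g x ^ 2) ^ 2 ≤
      (∫ x in a..b, g x ^ 2) * ∫ x in a..b, deriv (deriv g) x ^ 2 := by
  rw [← neg_sq, ← integral_mul_deriv_deriv_eq_neg hg hgab hgab']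
  exact sq_intervalIntegral_mul_le hab hg.continuous (hg.deriv'.continuous_deriv le_rfl)

end IntegralInequalities

theorem mul_le_mul_succ_of_sq_le_mul {a : ℕ → ℝ} {c K : ℝ} (hc : 0 ≤ c) (hK : 0 ≤ K)
    (ha : ∀ i, 0 ≤ a i) (hlog : ∀ i, a (i + 1) ^ 2 ≤ a i * a (i + 2))
    (h0 : c * a 0 ≤ K * a 1) (i : ℕ) : c * a i ≤ K * a (i + 1) := by
  induction i with
  | zero => exact h0
  | succ i ih =>
    rcases (ha (i + 1)).eq_or_lt with hzero | hpos
    · rw [← hzero, mul_zero]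
      exact mul_nonneg hK (ha _)
    · refine le_of_mul_le_mul_left ?_ hpos
      calc a (i + 1) * (c * a (i + 1)) = c * a (i + 1) ^ 2 := by ring
        _ ≤ c * (a i * a (i + 2)) := by gcongr; exact hlog i
        _ = c * a i * a (i + 2) := by ring
        _ ≤ K * a (i + 1) * a (i + 2) := mul_le_mul_of_nonneg_right ih (ha _)
        _ = a (i + 1) * (K * a (i + 1 + 1)) := by ring

theorem pow_mul_le_pow_mul_of_sq_le_mul {a : ℕ → ℝ} {c K : ℝ} (hc : 0 ≤ c) (hK : 0 ≤ K)
    (ha : ∀ i, 0 ≤ a i) (hlog : ∀ i, a (i + 1) ^ 2 ≤ a i * a (i + 2))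
    (h0 : c * a 0 ≤ K * a 1) (k : ℕ) : c ^ k * a 0 ≤ K ^ k * a k := by
  induction k with
  | zero => simp
  | succ k ih =>
    calc c ^ (k + 1) * a 0 = c * (c ^ k * a 0) := by ring
      _ ≤ c * (K ^ k * a k) := by gcongr
      _ = K ^ k * (c * a k) := by ring
      _ ≤ K ^ k * (K * a (k + 1)) :=
        mul_le_mul_of_nonneg_left (mul_le_mul_succ_of_sq_le_mul hc hK ha hlog h0 k)
          (pow_nonneg hK k)
      _ = K ^ (k + 1) * a (k + 1) := by ring

section SobolevNorms

instance isProbabilityMeasure_restrict_Ioc_zero_one :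
    IsProbabilityMeasure (volume.restrict (Ioc (0 : ℝ) 1)) :=
  ⟨by simp⟩

variable {m : ℕ} {p q : ℝ≥0∞} {v : ℝ → ℝ}

theorem sobLp_nonneg : 0 ≤ sobLp m p v :=
  ENNReal.toReal_nonneg

theorem sobLp_one_eq_integral (hv : Continuous (iteratedDeriv m v)) :
    sobLp m 1 v = ∫ x in 0..1, |iteratedDeriv m v x| := by
  rw [sobLp, toReal_eLpNorm hv.aestronglyMeasurable,
    lpNorm_one_eq_integral_norm hv.aestronglyMeasurable,
    intervalIntegral.integral_of_le zero_le_one]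
  rfl

theorem sobLp_two_sq_eq_integral (hv : Continuous (iteratedDeriv m v)) :
    sobLp m 2 v ^ 2 = ∫ x in 0..1, iteratedDeriv m v x ^ 2 := by
  rw [sobLp, toReal_eLpNorm hv.aestronglyMeasurable,
    lpNorm_eq_integral_norm_rpow_toReal two_ne_zero ENNReal.ofNat_ne_top
      hv.aestronglyMeasurable, intervalIntegral.integral_of_le zero_le_one,
    ← Real.rpow_mul_natCast (integral_nonneg fun _ => by positivity)]
  simp

theorem sobLp_mono_exponent (hv : Continuous (iteratedDeriv m v)) (hpq : p ≤ q) :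
    sobLp m p v ≤ sobLp m q v :=
  ENNReal.toReal_mono (memLp_restrict_Ioc_of_continuous hv q).eLpNorm_ne_top
    (eLpNorm_le_eLpNorm_of_exponent_le hpq hv.aestronglyMeasurable)

theorem sobLp_le_of_abs_le {C : ℝ} (hC : ∀ x, |iteratedDeriv m v x| ≤ C) : sobLp m p v ≤ C := by
  refine ENNReal.toReal_le_of_le_ofReal ((abs_nonneg _).trans (hC 0)) ?_
  simpa using eLpNorm_le_of_ae_bound (p := p) (μ := volume.restrict (Ioc (0 : ℝ) 1))
    (.of_forall hC)

theorem sobLp_pos (hv : Continuous (iteratedDeriv m v))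
    (hper : (iteratedDeriv m v).Periodic 1) (hp : p ≠ 0) {x : ℝ} (hx : iteratedDeriv m v x ≠ 0) :
    0 < sobLp m p v := by
  refine ENNReal.toReal_pos (fun hzero => hx ?_)
    (memLp_restrict_Ioc_of_continuous hv p).eLpNorm_ne_top
  rw [eLpNorm_eq_zero_iff hv.aestronglyMeasurable hp] at hzero
  obtain ⟨y, hy, hxy⟩ := hper.exists_mem_Ioc one_pos x 0
  rw [zero_add] at hy
  exact hxy.trans (Measure.eqOn_Ioc_of_ae_eq _ hzero hv.continuousOn continuousOn_const hy)

theorem periodic_iteratedDeriv {c : ℝ} (hv : v.Periodic c) (m : ℕ) :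
    (iteratedDeriv m v).Periodic c := fun x => by
  have hshift := congrFun (iteratedDeriv_comp_add_const m v c) x
  rw [← hshift, hv.funext]

theorem contDiff_iteratedDeriv (hv : ContDiff ℝ (⊤ : ℕ∞) v) (m : ℕ) :
    ContDiff ℝ (⊤ : ℕ∞) (iteratedDeriv m v) := by
  rw [iteratedDeriv_eq_iterate]
  exact hv.iterate_deriv m

theorem sq_sobLp_two_succ_le (hv : ContDiff ℝ (⊤ : ℕ∞) v) (hper : v.Periodic 1) (m : ℕ) :
    sobLp (m + 1) 2 v ^ 2 ≤ sobLp m 2 v * sobLp (m + 2) 2 v := by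
  have hcont (j : ℕ) : Continuous (iteratedDeriv j v) := (contDiff_iteratedDeriv hv j).continuous
  have hends (j : ℕ) : iteratedDeriv j v 0 = iteratedDeriv j v 1 := by
    simpa using (periodic_iteratedDeriv hper j 0).symm
  rw [← pow_le_pow_iff_left₀ (sq_nonneg _) (mul_nonneg sobLp_nonneg sobLp_nonneg) two_ne_zero,
    mul_pow]
  simp only [sobLp_two_sq_eq_integral (hcont _)]
  simpa only [← iteratedDeriv_succ] using sq_integral_deriv_sq_le zero_le_one
    (contDiff_infty.1 (contDiff_iteratedDeriv hv m) 2) (hends m)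
    (by simpa only [iteratedDeriv_succ] using hends (m + 1))

theorem sobLp_two_succ_pow_three_le (hv : ContDiff ℝ (⊤ : ℕ∞) v) (hper : v.Periodic 1) (m : ℕ) :
    sobLp (m + 1) 2 v ^ 3 ≤ 2 * sobLp (m + 1) 1 v ^ 2 * sobLp (m + 2) 2 v := by
  have hcont (j : ℕ) : Continuous (iteratedDeriv j v) := (contDiff_iteratedDeriv hv j).continuous
  have hends : iteratedDeriv m v 0 = iteratedDeriv m v 1 := by
    simpa using (periodic_iteratedDeriv hper m 0).symm
  obtain ⟨z, hz, hzero⟩ := exists_deriv_eq_zero zero_lt_one (hcont m).continuousOn hends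
  rw [← iteratedDeriv_succ] at hzero
  have hsq := integral_sq_pow_three_le
    (contDiff_infty.1 (contDiff_iteratedDeriv hv (m + 1)) 1) (Ioo_subset_Icc_self hz) hzero
  rw [← iteratedDeriv_succ, ← sobLp_two_sq_eq_integral (hcont _),
    ← sobLp_two_sq_eq_integral (hcont _), ← sobLp_one_eq_integral (hcont _)] at hsq
  have hnonneg : 0 ≤ 2 * sobLp (m + 1) 1 v ^ 2 * sobLp (m + 2) 2 v :=
    mul_nonneg (by positivity) sobLp_nonneg
  refine le_of_sq_le_sq ?_ hnonneg
  calc (sobLp (m + 1) 2 v ^ 3) ^ 2 = (sobLp (m + 1) 2 v ^ 2) ^ 3 := by ring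
    _ ≤ 4 * sobLp (m + 1) 1 v ^ 4 * sobLp (m + 2) 2 v ^ 2 := hsq
    _ = (2 * sobLp (m + 1) 1 v ^ 2 * sobLp (m + 2) 2 v) ^ 2 := by ring

theorem sobLp_two_succ_pow_le (hv : ContDiff ℝ (⊤ : ℕ∞) v) (hper : v.Periodic 1) (m k : ℕ) :
    sobLp (m + 1) 2 v ^ (2 * k + 1) ≤
      (2 * sobLp (m + 1) 1 v ^ 2) ^ k * sobLp (m + 1 + k) 2 v := by
  have hbase : sobLp (m + 1) 2 v ^ 2 * sobLp (m + 1 + 0) 2 v ≤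
      2 * sobLp (m + 1) 1 v ^ 2 * sobLp (m + 1 + 1) 2 v := by
    simpa only [add_zero, ← pow_succ] using sobLp_two_succ_pow_three_le hv hper m
  rw [pow_succ, pow_mul]
  exact pow_mul_le_pow_mul_of_sq_le_mul (a := fun i => sobLp (m + 1 + i) 2 v) (sq_nonneg _)
    (by positivity) (fun _ => sobLp_nonneg) (fun i => sq_sobLp_two_succ_le hv hper (m + 1 + i))
    hbase k

theorem abs_le_mul_of_deriv_le_of_periodic {c b z : ℝ} (hc : 0 < c) (hv : Differentiable ℝ v)
    (hper : v.Periodic c) (hb : ∀ x, deriv v x ≤ b) (hz : v z = 0) (x : ℝ) : |v x| ≤ b * c := by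
  have hb0 : 0 ≤ b := by
    have hrise := image_sub_le_mul_sub_of_deriv_le hv hb (le_add_of_nonneg_right hc.le : z ≤ z + c)
    rw [hper, sub_self, add_sub_cancel_left] at hrise
    exact nonneg_of_mul_nonneg_left hrise hc
  obtain ⟨y, hy, hxy⟩ := hper.exists_mem_Ico hc x z
  rw [hxy, abs_le]
  have hleft := image_sub_le_mul_sub_of_deriv_le hv hb hy.1
  have hright := image_sub_le_mul_sub_of_deriv_le hv hb hy.2.le
  rw [hper, hz] at hright
  rw [hz] at hleft
  constructor <;> nlinarith [hy.1, hy.2]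

theorem sobLp_zero_le_of_deriv_le {b : ℝ} (hv : Differentiable ℝ v) (hper : v.Periodic 1)
    (hmean : ∫ x in 0..1, v x = 0) (hb : ∀ x, deriv v x ≤ b) : sobLp 0 p v ≤ b := by
  obtain ⟨z, -, hz⟩ := exists_eq_interval_average zero_ne_one hv.continuous.continuousOn
  rw [interval_average_eq, hmean, smul_zero] at hz
  exact sobLp_le_of_abs_le fun x => by
    simpa using abs_le_mul_of_deriv_le_of_periodic one_pos hv hper hb hz x

theorem sobLp_one_one_le_of_deriv_le {b : ℝ} (hv : ContDiff ℝ 1 v) (hper : v.Periodic 1)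
    (hb : ∀ x, deriv v x ≤ b) : sobLp 1 1 v ≤ 2 * b := by
  have hv' : Continuous (deriv v) := hv.continuous_deriv le_rfl
  have hmean : ∫ x in 0..1, deriv v x = 0 := by
    rw [intervalIntegral.integral_deriv_eq_sub (fun x _ => hv.differentiable one_ne_zero x)
      (hv'.intervalIntegrable _ _), sub_eq_zero]
    simpa using hper 0
  rw [sobLp_one_eq_integral (by rwa [iteratedDeriv_one]), iteratedDeriv_one]
  rw [intervalIntegral.integral_of_le zero_le_one] at hmean ⊢
  exact integral_abs_le_of_le_of_integral_eq_zero
    ((memLp_restrict_Ioc_of_continuous hv' 1).integrable le_rfl) hmean hb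

end SobolevNorms

section StripCalculus

variable {E : Type*} [NormedAddCommGroup E] [NormedSpace ℝ E] {I J : Set ℝ} {G : ℝ → ℝ → E}
  {t : ℝ}

/-- `G = G t x` is jointly smooth on the space-time strip `I × ℝ`, up to the boundary times of `I`
in the sense of `ContDiffOn`. -/
def SmoothOver (I : Set ℝ) (G : ℝ → ℝ → E) : Prop :=
  ContDiffOn ℝ (⊤ : ℕ∞) (Function.uncurry G) (I ×ˢ univ)

theorem continuousOn_intervalIntegral_of_continuousOn {a b : ℝ}
    (hG : ContinuousOn (Function.uncurry G) (I ×ˢ univ)) :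
    ContinuousOn (fun t => ∫ x in a..b, G t x) I := by
  rw [continuousOn_iff_continuous_domRestrict]
  refine intervalIntegral.continuous_parametric_intervalIntegral_of_continuous'
    (f := fun (t : I) x => G t x) ?_ a b
  exact hG.comp_continuous (f := fun p : I × ℝ => ((p.1 : ℝ), p.2)) (by fun_prop)
    fun p => ⟨p.1.2, mem_univ _⟩

namespace SmoothOver

theorem mono (h : SmoothOver I G) (hJ : J ⊆ I) : SmoothOver J G :=
  ContDiffOn.mono h (prod_mono hJ Subset.rfl)

theorem hasFDerivWithinAt (h : SmoothOver I G) (ht : t ∈ I) (x : ℝ) :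
    HasFDerivWithinAt (Function.uncurry G)
      (fderivWithin ℝ (Function.uncurry G) (I ×ˢ univ) (t, x)) (I ×ˢ univ) (t, x) :=
  (ContDiffOn.differentiableOn h (by simp) (t, x) ⟨ht, mem_univ _⟩).hasFDerivWithinAt

theorem hasDerivAt_space (h : SmoothOver I G) (ht : t ∈ I) (x : ℝ) :
    HasDerivAt (G t) (fderivWithin ℝ (Function.uncurry G) (I ×ˢ univ) (t, x) (0, 1)) x := by
  rw [← hasDerivWithinAt_univ]
  exact (h.hasFDerivWithinAt ht x).comp_hasDerivWithinAt x
    ((hasDerivWithinAt_const x univ t).prodMk (hasDerivWithinAt_id x univ))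
    fun y _ => ⟨ht, mem_univ y⟩

theorem hasDerivWithinAt_time (h : SmoothOver I G) (ht : t ∈ I) (x : ℝ) :
    HasDerivWithinAt (fun s => G s x)
      (fderivWithin ℝ (Function.uncurry G) (I ×ˢ univ) (t, x) (1, 0)) I t :=
  (h.hasFDerivWithinAt ht x).comp_hasDerivWithinAt (f := fun s => (s, x)) t
    ((hasDerivWithinAt_id t I).prodMk (hasDerivWithinAt_const t I x))
    fun _ hs => mk_mem_prod hs (mem_univ x)

theorem slice (h : SmoothOver I G) (ht : t ∈ I) : ContDiff ℝ (⊤ : ℕ∞) (G t) := by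
  rw [← contDiffOn_univ]
  exact ContDiffOn.comp (t := I ×ˢ univ) (f := fun x : ℝ => (t, x)) h
    (contDiffOn_const.prodMk contDiffOn_id) fun x _ => mk_mem_prod ht (mem_univ x)

theorem fderivWithin_apply (h : SmoothOver I G) (hI : UniqueDiffOn ℝ I) (e : ℝ × ℝ) :
    SmoothOver I fun t x => fderivWithin ℝ (Function.uncurry G) (I ×ˢ univ) (t, x) e :=
  (ContDiffOn.fderivWithin (m := (⊤ : ℕ∞)) h (hI.prod uniqueDiffOn_univ) (by simp)).clm_apply
    contDiffOn_const

theorem congr {H : ℝ → ℝ → E} (h : SmoothOver I G) (hGH : ∀ t ∈ I, H t = G t) : SmoothOver I H :=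
  ContDiffOn.congr h fun p hp => congrFun (hGH p.1 hp.1) p.2

theorem deriv_space (h : SmoothOver I G) (hI : UniqueDiffOn ℝ I) :
    SmoothOver I fun t => deriv (G t) :=
  (h.fderivWithin_apply hI (0, 1)).congr fun _ ht => funext fun x => (h.hasDerivAt_space ht x).deriv

theorem iteratedDeriv_space (h : SmoothOver I G) (hI : UniqueDiffOn ℝ I) (m : ℕ) :
    SmoothOver I fun t => iteratedDeriv m (G t) := by
  induction m with
  | zero => simpa only [iteratedDeriv_zero] using h
  | succ m ih => simpa only [iteratedDeriv_succ] using ih.deriv_space hI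

theorem differentiableAt_time (h : SmoothOver I G) (hI : IsOpen I) (ht : t ∈ I) (x : ℝ) :
    DifferentiableAt ℝ (fun s => G s x) t :=
  ((h.hasDerivWithinAt_time ht x).hasDerivAt (hI.mem_nhds ht)).differentiableAt

theorem deriv_time (h : SmoothOver I G) (hI : IsOpen I) :
    SmoothOver I fun t x => deriv (fun s => G s x) t :=
  (h.fderivWithin_apply hI.uniqueDiffOn (1, 0)).congr fun _ ht => funext fun x =>
    ((h.hasDerivWithinAt_time ht x).hasDerivAt (hI.mem_nhds ht)).deriv

theorem deriv_time_deriv_space (h : SmoothOver I G) (hI : IsOpen I) (ht : t ∈ I) (x : ℝ) :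
    deriv (fun s => deriv (G s) x) t = deriv (fun y => deriv (fun s => G s y) t) x := by
  have hS : IsOpen (I ×ˢ (univ : Set ℝ)) := hI.prod isOpen_univ
  have hmem : (t, x) ∈ I ×ˢ (univ : Set ℝ) := ⟨ht, mem_univ x⟩
  set dG := fderivWithin ℝ (Function.uncurry G) (I ×ˢ univ)
  have hdG : DifferentiableAt ℝ dG (t, x) :=
    ((ContDiffOn.fderivWithin (m := (⊤ : ℕ∞)) h hS.uniqueDiffOn (by simp)).differentiableOn
      (by simp)).differentiableAt (hS.mem_nhds hmem)
  have hsymm : fderiv ℝ dG (t, x) (1, 0) (0, 1) = fderiv ℝ dG (t, x) (0, 1) (1, 0) := by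
    rw [← fderivWithin_of_isOpen hS hmem]
    exact (ContDiffOn.contDiffWithinAt h hmem).isSymmSndFDerivWithinAt
      (by simpa using WithTop.coe_le_coe.2 (le_top : (2 : ℕ∞) ≤ ⊤)) hS.uniqueDiffOn
      (subset_closure (hS.interior_eq.symm ▸ hmem)) hmem (1, 0) (0, 1)
  have hfderiv (e : ℝ × ℝ) :
      HasFDerivAt (fun p => dG p e) ((fderiv ℝ dG (t, x)).flip e) (t, x) :=
    (ContinuousLinearMap.apply ℝ E e).hasFDerivAt.comp (t, x) hdG.hasFDerivAt
  have hleft : HasDerivAt (fun s => dG (s, x) (0, 1)) (fderiv ℝ dG (t, x) (1, 0) (0, 1)) t :=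
    (hfderiv (0, 1)).comp_hasDerivAt (f := fun s => (s, x)) t
      ((hasDerivAt_id' t).prodMk (hasDerivAt_const t x))
  have hright : HasDerivAt (fun y => dG (t, y) (1, 0)) (fderiv ℝ dG (t, x) (0, 1) (1, 0)) x :=
    (hfderiv (1, 0)).comp_hasDerivAt (f := fun y => (t, y)) x
      ((hasDerivAt_const x t).prodMk (hasDerivAt_id' x))
  have hspace : (fun s => deriv (G s) x) =ᶠ[nhds t] fun s => dG (s, x) (0, 1) := by
    filter_upwards [hI.mem_nhds ht] with s hs
    exact (h.hasDerivAt_space hs x).deriv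
  have htime : (fun y => deriv (fun s => G s y) t) = fun y => dG (t, y) (1, 0) :=
    funext fun y => ((h.hasDerivWithinAt_time ht y).hasDerivAt (hI.mem_nhds ht)).deriv
  rw [hspace.deriv_eq, htime, hleft.deriv, hright.deriv, hsymm]

theorem hasDerivAt_intervalIntegral (h : SmoothOver I G) (hI : IsOpen I) (ht : t ∈ I) (a b : ℝ) :
    HasDerivAt (fun s => ∫ x in a..b, G s x) (∫ x in a..b, deriv (fun s => G s x) t) t := by
  obtain ⟨δ, hδ, hball⟩ := Metric.nhds_basis_closedBall.mem_iff.1 (hI.mem_nhds ht)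
  obtain ⟨M, hM⟩ := ((isCompact_closedBall t δ).prod isCompact_uIcc).exists_bound_of_continuousOn
    ((h.deriv_time hI).continuousOn.mono (prod_mono hball (subset_univ (uIcc a b))))
  refine (intervalIntegral.hasDerivAt_integral_of_dominated_loc_of_deriv_le (F := G)
    (F' := fun s x => deriv (fun r => G r x) s) (bound := fun _ => M)
    (Metric.closedBall_mem_nhds t hδ) ?_ ((h.slice ht).continuous.intervalIntegrable a b)
    ((h.deriv_time hI).slice ht).continuous.aestronglyMeasurable ?_ (by simp) ?_).2
  · filter_upwards [hI.mem_nhds ht] with s hs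
    exact (h.slice hs).continuous.aestronglyMeasurable
  · exact .of_forall fun x hx s hs => hM (s, x) ⟨hs, uIoc_subset_uIcc hx⟩
  · exact .of_forall fun x _ s hs => (h.differentiableAt_time hI (hball hs) x).hasDerivAt

end SmoothOver

end StripCalculus

section MaximumPrinciple

theorem exists_forall_le_of_periodic {K : Set ℝ} {W : ℝ → ℝ → ℝ} {c : ℝ} (hc : 0 < c)
    (hK : IsCompact K) (hne : K.Nonempty) (hW : ContinuousOn (Function.uncurry W) (K ×ˢ univ))
    (hper : ∀ t, (W t).Periodic c) :
    ∃ t₀ ∈ K, ∃ x₀, ∀ t ∈ K, ∀ x, W t x ≤ W t₀ x₀ := by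
  obtain ⟨⟨t₀, x₀⟩, hmem, hmax⟩ := (hK.prod (isCompact_Icc (a := 0) (b := c))).exists_isMaxOn
    (hne.prod (nonempty_Icc.2 hc.le)) (hW.mono (prod_mono_right (subset_univ _)))
  refine ⟨t₀, hmem.1, x₀, fun t ht x => ?_⟩
  obtain ⟨y, hy, hxy⟩ := (hper t).exists_mem_Ico₀ hc x
  rw [hxy]
  exact hmax (show (t, y) ∈ K ×ˢ Icc 0 c from ⟨ht, Ico_subset_Icc_self hy⟩)

theorem deriv_deriv_nonpos_of_isLocalMax {g : ℝ → ℝ} {x : ℝ} (hg : ContinuousAt g x)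
    (hmax : IsLocalMax g x) : deriv (deriv g) x ≤ 0 := by
  by_contra! hpos
  have hmin := isLocalMin_of_deriv_deriv_pos hpos hmax.deriv_eq_zero hg
  have hconst : g =ᶠ[nhds x] fun _ => g x := by
    filter_upwards [hmin, hmax] with y hy hy' using le_antisymm hy' hy
  simp [hconst.deriv.deriv_eq] at hpos

theorem nonneg_of_hasDerivWithinAt_of_isMaxOn_Icc {g : ℝ → ℝ} {g' a b : ℝ} (hab : a < b)
    (hg : HasDerivWithinAt g g' (Icc a b) b) (hmax : IsMaxOn g (Icc a b) b) : 0 ≤ g' := by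
  have hneg : g' * (a - b) ≤ 0 := by
    simpa [mul_comm] using hmax.localize.hasFDerivWithinAt_nonpos hg.hasFDerivWithinAt
      (sub_mem_posTangentConeAt_of_segment_subset
        ((convex_Icc a b).segment_subset (right_mem_Icc.2 hab.le) (left_mem_Icc.2 hab.le)))
  exact nonneg_of_mul_nonpos_left hneg (sub_neg.2 hab)

end MaximumPrinciple

section TimeAverage

variable {T₁ T₂ : ℝ} {A B : ℝ → ℝ}

theorem timeAvg_eq_interval_average : timeAvg T₁ T₂ A = ⨍ t in T₁..T₂, A t :=
  (interval_average_eq A T₁ T₂).symm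

theorem timeAvg_const_mul (c : ℝ) : timeAvg T₁ T₂ (fun t => c * A t) = c * timeAvg T₁ T₂ A := by
  rw [timeAvg, intervalIntegral.integral_const_mul, mul_left_comm, timeAvg]

theorem timeAvg_mono (hT : T₁ ≤ T₂) (hA : ContinuousOn A (Icc T₁ T₂))
    (hB : ContinuousOn B (Icc T₁ T₂)) (hAB : ∀ t ∈ Icc T₁ T₂, A t ≤ B t) :
    timeAvg T₁ T₂ A ≤ timeAvg T₁ T₂ B :=
  mul_le_mul_of_nonneg_left
    (intervalIntegral.integral_mono_on hT (hA.intervalIntegrable_of_Icc hT)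
      (hB.intervalIntegrable_of_Icc hT) hAB)
    (inv_nonneg.2 (sub_nonneg.2 hT))

theorem pow_timeAvg_le (hT : T₁ < T₂) (hA : ContinuousOn A (Icc T₁ T₂))
    (hA0 : ∀ t ∈ Icc T₁ T₂, 0 ≤ A t) (n : ℕ) :
    timeAvg T₁ T₂ A ^ n ≤ timeAvg T₁ T₂ fun t => A t ^ n := by
  simp only [timeAvg_eq_interval_average, uIoc_of_le hT.le]
  refine (convexOn_pow n).map_set_average_le (continuous_pow n).continuousOn isClosed_Ici
    (by simp [hT]) (by simp) ?_ (hA.integrableOn_Icc.mono_set Ioc_subset_Icc_self)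
    ((hA.pow n).integrableOn_Icc.mono_set Ioc_subset_Icc_self)
  filter_upwards [ae_restrict_mem measurableSet_Ioc] with t ht
  exact hA0 t (Ioc_subset_Icc_self ht)

theorem burgersT₁_pos {D Ct : ℝ} (hD : 0 < D) (hCt : 0 < Ct) : 0 < burgersT₁ D Ct := by
  rw [burgersT₁]
  positivity

theorem burgersT₁_lt_burgersT₂ {σ D Ct : ℝ} (hD : 0 < D) (hCt : 0 < Ct) :
    burgersT₁ D Ct < burgersT₂ σ D Ct :=
  lt_max_of_lt_left (by linarith [burgersT₁_pos hD hCt])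

end TimeAverage

namespace IsBurgersSolution

variable {f : ℝ → ℝ} {σ ν t : ℝ} {u : ℝ → ℝ → ℝ}

theorem periodic (h : IsBurgersSolution f σ ν u) (t : ℝ) : (u t).Periodic 1 :=
  h.hper t

theorem smoothOver_Ici (h : IsBurgersSolution f σ ν u) : SmoothOver (Ici 0) u :=
  h.hu

theorem smoothOver_Ioi (h : IsBurgersSolution f σ ν u) : SmoothOver (Ioi 0) u :=
  h.smoothOver_Ici.mono Ioi_subset_Ici_self

theorem contDiff (h : IsBurgersSolution f σ ν u) (ht : 0 ≤ t) : ContDiff ℝ (⊤ : ℕ∞) (u t) :=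
  h.smoothOver_Ici.slice ht

theorem sobLp_two_sq_eq_integral (h : IsBurgersSolution f σ ν u) (m : ℕ) (ht : 0 ≤ t) :
    sobLp m 2 (u t) ^ 2 = ∫ x in 0..1, iteratedDeriv m (u t) x ^ 2 :=
  _root_.sobLp_two_sq_eq_integral (contDiff_iteratedDeriv (h.contDiff ht) m).continuous

theorem continuousOn_sobLp_two_sq (h : IsBurgersSolution f σ ν u) (m : ℕ) :
    ContinuousOn (fun t => sobLp m 2 (u t) ^ 2) (Ici 0) := by
  have hsq : SmoothOver (Ici 0) fun t x => iteratedDeriv m (u t) x ^ 2 :=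
    ContDiffOn.pow (h.smoothOver_Ici.iteratedDeriv_space (uniqueDiffOn_Ici 0) m) 2
  exact (continuousOn_intervalIntegral_of_continuousOn hsq.continuousOn).congr
    fun _ ht => h.sobLp_two_sq_eq_integral m ht

theorem sobLp_zero_one_pos (h : IsBurgersSolution f σ ν u) : 0 < sobLp 0 1 (u 0) := by
  obtain ⟨x, hx⟩ := h.hinit
  exact sobLp_pos (by simpa using (h.contDiff le_rfl).continuous)
    (periodic_iteratedDeriv (h.periodic 0) 0) one_ne_zero (by simpa using hx)

theorem burgersD_pos (h : IsBurgersSolution f σ ν u) : 0 < burgersD u :=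
  lt_max_of_lt_left (inv_pos.2 h.sobLp_zero_one_pos)

theorem inv_burgersD_le_sobLp_zero_two (h : IsBurgersSolution f σ ν u) :
    (burgersD u)⁻¹ ≤ sobLp 0 2 (u 0) :=
  (inv_le_of_inv_le₀ h.sobLp_zero_one_pos (le_max_left _ _)).trans
    (sobLp_mono_exponent (by simpa using (h.contDiff le_rfl).continuous) one_le_two)

theorem deriv_time_eq (h : IsBurgersSolution f σ ν u) (ht : 0 < t) (x : ℝ) :
    deriv (fun s => u s x) t = ν * deriv (deriv (u t)) x - deriv f (u t x) * deriv (u t) x := by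
  linarith [h.hpde t ht x]

theorem deriv_time_deriv_space_eq (h : IsBurgersSolution f σ ν u) (ht : 0 < t) (x : ℝ) :
    deriv (fun s => deriv (u s) x) t = ν * deriv (deriv (deriv (u t))) x -
      (deriv (deriv f) (u t x) * deriv (u t) x ^ 2 +
        deriv f (u t x) * deriv (deriv (u t)) x) := by
  have hasDerivAt_deriv {g : ℝ → ℝ} (hg : ContDiff ℝ (⊤ : ℕ∞) g) (k : ℕ) (y : ℝ) :
      HasDerivAt (deriv^[k] g) (deriv (deriv^[k] g) y) y :=
    ((hg.iterate_deriv k).differentiable (by simp) y).hasDerivAt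
  have hu := h.contDiff ht.le
  have hderiv := ((hasDerivAt_deriv hu 2 x).const_mul ν).sub
    (((hasDerivAt_deriv h.hf 1 (u t x)).comp x (hasDerivAt_deriv hu 0 x)).mul
      (hasDerivAt_deriv hu 1 x))
  rw [h.smoothOver_Ioi.deriv_time_deriv_space isOpen_Ioi ht, funext (h.deriv_time_eq ht)]
  refine hderiv.deriv.trans ?_
  simp only [Function.iterate_succ, Function.iterate_zero, Function.comp_apply, id]
  ring

theorem deriv_time_deriv_space_le_of_isLocalMax (h : IsBurgersSolution f σ ν u) (ht : 0 < t)
    {x : ℝ} (hmax : IsLocalMax (deriv (u t)) x) :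
    deriv (fun s => deriv (u s) x) t ≤ -(σ * deriv (u t) x ^ 2) := by
  have hviscous : ν * deriv (deriv (deriv (u t))) x ≤ 0 :=
    mul_nonpos_of_nonneg_of_nonpos h.hν.le (deriv_deriv_nonpos_of_isLocalMax
      ((h.contDiff ht.le).continuous_deriv (by simp)).continuousAt hmax)
  have hconvex : σ ≤ deriv (deriv f) (u t x) := by
    simpa only [iteratedDeriv_succ, iteratedDeriv_zero] using h.hconv (u t x)
  rw [h.deriv_time_deriv_space_eq ht, hmax.deriv_eq_zero]
  linarith [mul_le_mul_of_nonneg_right hconvex (sq_nonneg (deriv (u t) x))]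

/- Oleinik's one-sided bound: at a positive space-time maximum of `t * u_x` over `[0, T]`, the time
derivative `u_x + t * u_xt ≤ u_x - σ * t * u_x ^ 2` is nonnegative. -/
theorem mul_deriv_space_le_inv (h : IsBurgersSolution f σ ν u) (ht : 0 ≤ t) (x : ℝ) :
    t * deriv (u t) x ≤ σ⁻¹ := by
  have hux := h.smoothOver_Ici.deriv_space (uniqueDiffOn_Ici 0)
  have hcont : ContinuousOn (Function.uncurry fun s y => s * deriv (u s) y)
      (Icc 0 t ×ˢ univ) :=
    continuousOn_fst.mul (hux.mono Icc_subset_Ici_self).continuousOn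
  obtain ⟨t₀, ht₀, x₀, hmax⟩ := exists_forall_le_of_periodic one_pos isCompact_Icc
    (nonempty_Icc.2 ht) hcont fun s y => by
      simpa using Or.inl (periodic_iteratedDeriv (h.periodic s) 1 y)
  refine (hmax t (right_mem_Icc.2 ht) x).trans ?_
  rcases le_or_gt (t₀ * deriv (u t₀) x₀) 0 with hnonpos | hpos
  · exact hnonpos.trans (inv_nonneg.2 h.hσ.le)
  have ht₀_pos : 0 < t₀ := ht₀.1.lt_of_ne (by rintro rfl; simp at hpos)
  have hux_pos : 0 < deriv (u t₀) x₀ := pos_of_mul_pos_right hpos ht₀.1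
  have hmax_space : IsLocalMax (deriv (u t₀)) x₀ := .of_forall fun y =>
    le_of_mul_le_mul_left (hmax t₀ ht₀ y) ht₀_pos
  have hmax_time : IsMaxOn (fun s => s * deriv (u s) x₀) (Icc 0 t₀) t₀ := fun s hs =>
    hmax s ⟨hs.1, hs.2.trans ht₀.2⟩ x₀
  have htime := nonneg_of_hasDerivWithinAt_of_isMaxOn_Icc ht₀_pos
    ((hasDerivAt_id' t₀).mul ((hux.mono Ioi_subset_Ici_self).differentiableAt_time isOpen_Ioi
      ht₀_pos x₀).hasDerivAt).hasDerivWithinAt hmax_time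
  have hreaction := mul_le_mul_of_nonneg_left
    (h.deriv_time_deriv_space_le_of_isLocalMax ht₀_pos hmax_space) ht₀.1
  rw [← one_div, le_div_iff₀ h.hσ]
  refine le_of_mul_le_mul_left ?_ hux_pos
  linarith

theorem deriv_space_le (h : IsBurgersSolution f σ ν u) (ht : 0 < t) (x : ℝ) :
    deriv (u t) x ≤ (σ * t)⁻¹ := by
  rw [mul_inv, ← div_eq_mul_inv, le_div_iff₀' ht]
  exact h.mul_deriv_space_le_inv ht.le x

theorem sobLp_one_one_le (h : IsBurgersSolution f σ ν u) (ht : 0 < t) :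
    sobLp 1 1 (u t) ≤ 2 * (σ * t)⁻¹ :=
  sobLp_one_one_le_of_deriv_le (contDiff_infty.1 (h.contDiff ht.le) 1) (h.periodic t)
    (h.deriv_space_le ht)

theorem sobLp_zero_le (h : IsBurgersSolution f σ ν u) (p : ℝ≥0∞) (ht : 0 < t) :
    sobLp 0 p (u t) ≤ (σ * t)⁻¹ :=
  sobLp_zero_le_of_deriv_le ((h.contDiff ht.le).differentiable (by simp)) (h.periodic t)
    (by rw [intervalIntegral.integral_of_le zero_le_one, h.hmean t ht.le]) (h.deriv_space_le ht)

theorem integral_mul_deriv_time (h : IsBurgersSolution f σ ν u) (ht : 0 < t) :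
    ∫ x in 0..1, u t x * deriv (fun s => u s x) t = -(ν * sobLp 1 2 (u t) ^ 2) := by
  have hu := h.contDiff ht.le
  have hcont : Continuous (u t) := hu.continuous
  have hcont' : Continuous (deriv (u t)) := hu.continuous_deriv (by simp)
  have hcont'' : Continuous (deriv (deriv (u t))) := (hu.iterate_deriv 2).continuous
  have hflux : Continuous fun y => y * deriv f y := continuous_id.mul
    (h.hf.continuous_deriv (by simp))
  have hends : u t 0 = u t 1 := by simpa using (h.periodic t 0).symm
  have hends' : deriv (u t) 0 = deriv (u t) 1 := by
    simpa using (periodic_iteratedDeriv (h.periodic t) 1 0).symm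
  have hviscous : Continuous fun x => ν * (u t x * deriv (deriv (u t)) x) := by fun_prop
  have hconvection : Continuous fun x => u t x * deriv f (u t x) * deriv (u t) x :=
    (hflux.comp hcont).mul hcont'
  have htransport : ∫ x in 0..1, u t x * deriv f (u t x) * deriv (u t) x = 0 := by
    refine (intervalIntegral.integral_comp_mul_deriv (f := u t) (g := fun y => y * deriv f y)
      (fun x _ => (hu.differentiable (by simp) x).hasDerivAt) hcont'.continuousOn hflux).trans ?_
    rw [hends, intervalIntegral.integral_same]
  calc ∫ x in 0..1, u t x * deriv (fun s => u s x) t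
      = ∫ x in 0..1, (ν * (u t x * deriv (deriv (u t)) x)
          - u t x * deriv f (u t x) * deriv (u t) x) :=
        intervalIntegral.integral_congr fun x _ => by
          simp only [h.deriv_time_eq ht x]
          ring
    _ = ν * ∫ x in 0..1, u t x * deriv (deriv (u t)) x := by
        rw [intervalIntegral.integral_sub (hviscous.intervalIntegrable _ _)
          (hconvection.intervalIntegrable _ _), htransport, sub_zero,
          intervalIntegral.integral_const_mul]
    _ = -(ν * sobLp 1 2 (u t) ^ 2) := by
        rw [integral_mul_deriv_deriv_eq_neg (contDiff_infty.1 hu 2) hends hends',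
          h.sobLp_two_sq_eq_integral 1 ht.le, iteratedDeriv_one, mul_neg]

theorem hasDerivAt_sobLp_zero_two_sq (h : IsBurgersSolution f σ ν u) (ht : 0 < t) :
    HasDerivAt (fun s => sobLp 0 2 (u s) ^ 2) (-(2 * ν * sobLp 1 2 (u t) ^ 2)) t := by
  have hsq : SmoothOver (Ioi 0) fun s x => u s x ^ 2 := ContDiffOn.pow h.smoothOver_Ioi 2
  have henergy : (fun s => sobLp 0 2 (u s) ^ 2) =ᶠ[nhds t] fun s => ∫ x in 0..1, u s x ^ 2 := by
    filter_upwards [Ioi_mem_nhds ht] with s hs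
    simpa using h.sobLp_two_sq_eq_integral 0 hs.le
  refine ((hsq.hasDerivAt_intervalIntegral isOpen_Ioi ht 0 1).congr_of_eventuallyEq
    henergy).congr_deriv ?_
  calc ∫ x in 0..1, deriv (fun s => u s x ^ 2) t
      = ∫ x in 0..1, 2 * (u t x * deriv (fun s => u s x) t) :=
        intervalIntegral.integral_congr fun x _ => by
          simp [(h.smoothOver_Ioi.differentiableAt_time isOpen_Ioi ht x).hasDerivAt.fun_pow 2
            |>.deriv, mul_assoc]
    _ = -(2 * ν * sobLp 1 2 (u t) ^ 2) := by
        rw [intervalIntegral.integral_const_mul, h.integral_mul_deriv_time ht]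
        ring

theorem two_mul_integral_sobLp_one_two_sq (h : IsBurgersSolution f σ ν u) {T₁ T₂ : ℝ}
    (hT₁ : 0 < T₁) (hT : T₁ ≤ T₂) :
    2 * ν * ∫ t in T₁..T₂, sobLp 1 2 (u t) ^ 2 =
      sobLp 0 2 (u T₁) ^ 2 - sobLp 0 2 (u T₂) ^ 2 := by
  have hpos : ∀ t ∈ uIcc T₁ T₂, 0 < t := fun t ht =>
    hT₁.trans_le (uIcc_of_le hT ▸ ht).1
  have hftc := intervalIntegral.integral_eq_sub_of_hasDerivAt
    (fun t ht => h.hasDerivAt_sobLp_zero_two_sq (hpos t ht))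
    ((((h.continuousOn_sobLp_two_sq 1).mono fun t ht => (hpos t ht).le).const_mul
      (2 * ν)).neg.intervalIntegrable)
  rw [intervalIntegral.integral_neg, intervalIntegral.integral_const_mul] at hftc
  linarith

theorem sobLp_zero_two_sq_sub_le (h : IsBurgersSolution f σ ν u) {C T : ℝ} (hT : 0 ≤ T)
    (hC : ∀ t ∈ Ioo 0 T, sobLp 1 2 (u t) ^ 2 ≤ C * ν⁻¹) :
    sobLp 0 2 (u 0) ^ 2 - 2 * C * T ≤ sobLp 0 2 (u T) ^ 2 := by
  have hdecay := (convex_Icc 0 T).mul_sub_le_image_sub_of_le_deriv (C := -(2 * C))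
    ((h.continuousOn_sobLp_two_sq 0).mono Icc_subset_Ici_self)
    (fun t ht => by
      rw [interior_Icc] at ht
      exact (h.hasDerivAt_sobLp_zero_two_sq ht.1).differentiableAt.differentiableWithinAt)
    (fun t ht => by
      rw [interior_Icc] at ht
      have hdissipation := mul_le_mul_of_nonneg_left (hC t ht) h.hν.le
      rw [mul_left_comm, mul_inv_cancel₀ h.hν.ne', mul_one] at hdissipation
      rw [(h.hasDerivAt_sobLp_zero_two_sq ht.1).deriv]
      linarith)
    0 (left_mem_Icc.2 hT) T (right_mem_Icc.2 hT) hT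
  linarith

theorem half_inv_burgersD_sq_le_sobLp_burgersT₁ (h : IsBurgersSolution f σ ν u) {Ct : ℝ}
    (hCt : 0 < Ct)
    (hbound : ∀ t ∈ Ioo 0 (burgersT₁ (burgersD u) Ct), sobLp 1 2 (u t) ^ 2 ≤ Ct * ν⁻¹) :
    (burgersD u ^ 2)⁻¹ / 2 ≤ sobLp 0 2 (u (burgersT₁ (burgersD u) Ct)) ^ 2 := by
  have hinitial : (burgersD u ^ 2)⁻¹ ≤ sobLp 0 2 (u 0) ^ 2 := by
    rw [← inv_pow]
    exact pow_le_pow_left₀ (inv_nonneg.2 h.burgersD_pos.le) h.inv_burgersD_le_sobLp_zero_two 2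
  have hT₁ : 2 * Ct * burgersT₁ (burgersD u) Ct = (burgersD u ^ 2)⁻¹ / 2 := by
    rw [burgersT₁]
    field_simp
    norm_num
  linarith [h.sobLp_zero_two_sq_sub_le (burgersT₁_pos h.burgersD_pos hCt).le hbound]

theorem sobLp_zero_two_burgersT₂_sq_le (h : IsBurgersSolution f σ ν u) (Ct : ℝ) :
    sobLp 0 2 (u (burgersT₂ σ (burgersD u) Ct)) ^ 2 ≤ (burgersD u ^ 2)⁻¹ / 4 := by
  have hD := h.burgersD_pos
  have hσ := h.hσ
  have hle : 2 * burgersD u * σ⁻¹ ≤ burgersT₂ σ (burgersD u) Ct := le_max_right _ _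
  have hT₂ : 2 * burgersD u ≤ σ * burgersT₂ σ (burgersD u) Ct := by
    rwa [← div_eq_mul_inv, div_le_iff₀' hσ] at hle
  calc sobLp 0 2 (u (burgersT₂ σ (burgersD u) Ct)) ^ 2
      ≤ ((σ * burgersT₂ σ (burgersD u) Ct)⁻¹) ^ 2 :=
        pow_le_pow_left₀ sobLp_nonneg
          (h.sobLp_zero_le 2 ((show 0 < 2 * burgersD u * σ⁻¹ by positivity).trans_le hle)) 2
    _ ≤ ((2 * burgersD u)⁻¹) ^ 2 :=
        pow_le_pow_left₀ (inv_nonneg.2 ((by positivity : 0 ≤ 2 * burgersD u).trans hT₂))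
          (inv_anti₀ (by positivity) hT₂) 2
    _ = (burgersD u ^ 2)⁻¹ / 4 := by ring

theorem inv_mul_inv_le_timeAvg_sobLp_one_two_sq (h : IsBurgersSolution f σ ν u) {Ct : ℝ}
    (hCt : 0 < Ct)
    (hbound : ∀ t ∈ Ioo 0 (burgersT₁ (burgersD u) Ct), sobLp 1 2 (u t) ^ 2 ≤ Ct * ν⁻¹) :
    (burgersT₂ σ (burgersD u) Ct - burgersT₁ (burgersD u) Ct)⁻¹ * (8 * burgersD u ^ 2)⁻¹ * ν⁻¹ ≤
      timeAvg (burgersT₁ (burgersD u) Ct) (burgersT₂ σ (burgersD u) Ct)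
        fun t => sobLp 1 2 (u t) ^ 2 := by
  have hT : burgersT₁ (burgersD u) Ct < burgersT₂ σ (burgersD u) Ct :=
    burgersT₁_lt_burgersT₂ h.burgersD_pos hCt
  rw [timeAvg, mul_assoc]
  refine mul_le_mul_of_nonneg_left ?_ (inv_nonneg.2 (sub_nonneg.2 hT.le))
  rw [← div_eq_mul_inv, div_le_iff₀' h.hν, mul_inv]
  linarith [h.half_inv_burgersD_sq_le_sobLp_burgersT₁ hCt hbound,
    h.sobLp_zero_two_burgersT₂_sq_le Ct,
    h.two_mul_integral_sobLp_one_two_sq (burgersT₁_pos h.burgersD_pos hCt) hT.le]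

theorem sobLp_one_two_sq_pow_le (h : IsBurgersSolution f σ ν u) {T : ℝ} (hT : 0 < T) (ht : T ≤ t)
    (k : ℕ) :
    (sobLp 1 2 (u t) ^ 2) ^ (2 * k + 1) ≤
      ((2 * (2 * (σ * T)⁻¹) ^ 2) ^ k) ^ 2 * sobLp (k + 1) 2 (u t) ^ 2 := by
  have hσ := h.hσ
  have ht0 : 0 < t := hT.trans_le ht
  have hone : sobLp 1 1 (u t) ≤ 2 * (σ * T)⁻¹ :=
    (h.sobLp_one_one_le ht0).trans (by gcongr)
  have hinterp : sobLp 1 2 (u t) ^ (2 * k + 1) ≤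
      (2 * sobLp 1 1 (u t) ^ 2) ^ k * sobLp (k + 1) 2 (u t) := by
    simpa only [zero_add, add_comm k 1] using
      sobLp_two_succ_pow_le (h.contDiff ht0.le) (h.periodic t) 0 k
  rw [pow_right_comm, ← mul_pow]
  refine pow_le_pow_left₀ (pow_nonneg sobLp_nonneg _) (hinterp.trans ?_) 2
  gcongr
  exacts [sobLp_nonneg, sobLp_nonneg]

theorem timeAvg_sobLp_one_two_sq_pow_le (h : IsBurgersSolution f σ ν u) {T₁ T₂ : ℝ} (hT₁ : 0 < T₁)
    (hT : T₁ < T₂) (k : ℕ) :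
    timeAvg T₁ T₂ (fun t => sobLp 1 2 (u t) ^ 2) ^ (2 * k + 1) ≤
      ((2 * (2 * (σ * T₁)⁻¹) ^ 2) ^ k) ^ 2 *
        timeAvg T₁ T₂ fun t => sobLp (k + 1) 2 (u t) ^ 2 := by
  have hcont (m : ℕ) : ContinuousOn (fun t => sobLp m 2 (u t) ^ 2) (Icc T₁ T₂) :=
    (h.continuousOn_sobLp_two_sq m).mono fun _ ht => hT₁.le.trans ht.1
  refine (pow_timeAvg_le hT (hcont 1) (fun _ _ => sq_nonneg _) _).trans ?_
  rw [← timeAvg_const_mul]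
  exact timeAvg_mono hT.le ((hcont 1).pow _) (continuousOn_const.mul (hcont (k + 1)))
    fun t ht => h.sobLp_one_two_sq_pow_le hT₁ ht.1 k

end IsBurgersSolution

theorem statement9_general (f : ℝ → ℝ) (σ D Ct : ℝ) (hCt : 0 < Ct) (m : ℕ) (hm : 1 ≤ m) :
    ∃ c > 0, ∀ (ν : ℝ) (u : ℝ → ℝ → ℝ), IsBurgersSolution f σ ν u → burgersD u = D →
      (∀ t ∈ Ioo 0 (burgersT₁ D Ct), sobLp 1 2 (u t) ^ 2 ≤ Ct * ν⁻¹) →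
        c * ν ^ (-(2 * (m : ℝ) - 1)) ≤
          timeAvg (burgersT₁ D Ct) (burgersT₂ σ D Ct) fun t => sobLp m 2 (u t) ^ 2 := by
  by_cases hpos : 0 < D ∧ 0 < σ
  swap
  · exact ⟨1, one_pos, fun ν u h hD => absurd ⟨hD ▸ h.burgersD_pos, h.hσ⟩ hpos⟩
  obtain ⟨hD, hσ⟩ := hpos
  obtain ⟨k, rfl⟩ := Nat.exists_eq_add_of_le' hm
  have hT₁ := burgersT₁_pos hD hCt
  have hT : burgersT₁ D Ct < burgersT₂ σ D Ct := burgersT₁_lt_burgersT₂ hD hCt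
  have hlength := sub_pos.2 hT
  set K := ((2 * (2 * (σ * burgersT₁ D Ct)⁻¹) ^ 2) ^ k) ^ 2
  have hK : 0 < K := by positivity
  set s := (burgersT₂ σ D Ct - burgersT₁ D Ct)⁻¹ * (8 * D ^ 2)⁻¹
  have hs : 0 < s := by positivity
  refine ⟨s ^ (2 * k + 1) / K, by positivity, fun ν u h hu hbound => ?_⟩
  subst hu
  have hν := h.hν
  have hexponent : ν ^ (-(2 * ((k + 1 : ℕ) : ℝ) - 1)) = ν⁻¹ ^ (2 * k + 1) := by
    rw [Real.rpow_neg hν.le, inv_pow, ← Real.rpow_natCast]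
    push_cast
    ring_nf
  rw [hexponent, div_mul_eq_mul_div, ← mul_pow, div_le_iff₀' hK]
  exact (pow_le_pow_left₀ (by positivity)
    (h.inv_mul_inv_le_timeAvg_sobLp_one_two_sq hCt hbound) _).trans
    (h.timeAvg_sobLp_one_two_sq_pow_le hT₁ hT k)

/-- For every integer `m ≥ 1` there is `c > 0` depending only on
`f`, `D`, `m` such that for every `ν ∈ (0,1]`, the time average over `[T₁,T₂]`
satisfies `{‖u(t)‖_m²} ≥ c ν^{-(2m-1)}`. -/
theorem statement9 (f : ℝ → ℝ) (σ D Ct : ℝ) (hCt : 0 < Ct)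
    (hCtb : ∀ ν, 0 < ν → ν ≤ 1 →
      ∀ u : ℝ → ℝ → ℝ, IsBurgersSolution f σ ν u → burgersD u = D →
        ∀ t, 0 ≤ t → sobLp 1 2 (u t) ^ 2 ≤ Ct * ν⁻¹)
    (m : ℕ) (hm : 1 ≤ m) :
    ∃ c > 0, ∀ ν, 0 < ν → ν ≤ 1 →
      ∀ u : ℝ → ℝ → ℝ, IsBurgersSolution f σ ν u → burgersD u = D →
        c * ν ^ (-(2 * (m : ℝ) - 1))
          ≤ timeAvg (burgersT₁ D Ct) (burgersT₂ σ D Ct)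
              (fun t => sobLp m 2 (u t) ^ 2) := by
  obtain ⟨c, hc, hlower⟩ := statement9_general f σ D Ct hCt m hm
  exact ⟨c, hc, fun ν hν hν1 u h hD =>
    hlower ν u h hD fun t ht => hCtb ν hν hν1 u h hD t ht.1.le⟩
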